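/- Let φ : [0,(m+1)ε] → ℝⁿ be the piecewise-controlled trajectory corresponding to ε > 0 and controls u⁰, …, uᵐ ∈ U, and set xʲ = φ(jε) for j ∈ {0,…,m+1}. Then for every j ∈ {0,…,m}, ‖v_{xʲ⁺¹}(uʲ) − v_{xᵐ⁺¹}(uʲ)‖ ≤ M₀M₁(m+1)³ε. -/

import Mathlib

/-!
A control-affine velocity `f x + ∑ uᵢ gᵢ x` with `m` controls `|uᵢ| ≤ 1` has norm at most
`(m + 1) M₀` and is `(m + 1) M₁`-Lipschitz in `x`. By the mean value inequality, one step of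
length `ε` moves the trajectory by at most `(m + 1) M₀ ε`, and at most `m + 1` steps separate
`xʲ⁺¹` from `xᵐ⁺¹`, so their distance is at most `(m + 1)² M₀ ε`. The Lipschitz bound supplies the
third factor `m + 1`.
-/

/-- Mean value inequality for a curve differentiable only in the open interval: the Lipschitz
bound on `Ioo a b` passes to its closure by continuity. -/
lemma norm_sub_le_of_hasDerivAt_Ioo {E : Type*} [NormedAddCommGroup E] [NormedSpace ℝ E]
    {φ φ' : ℝ → E} {a b C : ℝ} (hab : a < b) (hC : 0 ≤ C)
    (hc : ContinuousOn φ (Set.Icc a b))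
    (hd : ∀ t ∈ Set.Ioo a b, HasDerivAt φ (φ' t) t)
    (hb : ∀ t ∈ Set.Ioo a b, ‖φ' t‖ ≤ C) :
    ‖φ a - φ b‖ ≤ C * (b - a) := by
  have hL : LipschitzOnWith ⟨C, hC⟩ φ (Set.Ioo a b) :=
    (convex_Ioo a b).lipschitzOnWith_of_nnnorm_hasDerivWithin_le
      (fun t ht => (hd t ht).hasDerivWithinAt) (fun t ht => hb t ht)
  have hL' := hL.closure (by rwa [closure_Ioo hab.ne])
  rw [closure_Ioo hab.ne] at hL'
  have h := hL'.dist_le_mul a (Set.left_mem_Icc.2 hab.le) b (Set.right_mem_Icc.2 hab.le)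
  rwa [dist_eq_norm, Real.dist_eq, abs_sub_comm, abs_of_pos (sub_pos.2 hab)] at h

lemma norm_add_sum_smul_le {E : Type*} [NormedAddCommGroup E] [NormedSpace ℝ E] {m : ℕ}
    {a : E} {b : Fin m → E} {u : Fin m → ℝ} {C : ℝ} (hu : ∀ i, |u i| ≤ 1)
    (ha : ‖a‖ ≤ C) (hb : ∀ i, ‖b i‖ ≤ C) :
    ‖a + ∑ i, u i • b i‖ ≤ (m + 1) * C := by
  have h : ‖∑ i, u i • b i‖ ≤ ∑ _i : Fin m, C := norm_sum_le_of_le _ fun i _ => by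
    rw [norm_smul, Real.norm_eq_abs]
    exact (mul_le_of_le_one_left (norm_nonneg _) (hu i)).trans (hb i)
  simp only [Finset.sum_const, Finset.card_univ, Fintype.card_fin, nsmul_eq_mul] at h
  linarith [norm_add_le a (∑ i, u i • b i)]

/-- Let φ be the piecewise-controlled trajectory corresponding to ε > 0 and
controls u⁰, …, uᵐ ∈ U, and xʲ = φ(jε). Then for every j ∈ {0,…,m},
‖v_{xʲ⁺¹}(uʲ) − v_{xᵐ⁺¹}(uʲ)‖ ≤ M₀M₁(m+1)³ε. -/
theorem velocity_drift_bound
    (n m : ℕ) (hm : 1 ≤ m) (M₀ M₁ : ℝ) (hM₀ : 0 ≤ M₀) (hM₁ : 0 ≤ M₁)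
    (f : EuclideanSpace ℝ (Fin n) → EuclideanSpace ℝ (Fin n))
    (g : Fin m → EuclideanSpace ℝ (Fin n) → EuclideanSpace ℝ (Fin n))
    (hf : ∀ x, ‖f x‖ ≤ M₀) (hg : ∀ i x, ‖g i x‖ ≤ M₀)
    (hfL : ∀ x y, ‖f x - f y‖ ≤ M₁ * ‖x - y‖)
    (hgL : ∀ i x y, ‖g i x - g i y‖ ≤ M₁ * ‖x - y‖)
    (ε : ℝ) (hε : 0 < ε)
    (uc : ℕ → EuclideanSpace ℝ (Fin m))
    (hucU : ∀ j, j ≤ m → ∀ i, |uc j i| ≤ 1)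
    (φ : ℝ → EuclideanSpace ℝ (Fin n))
    (hφc : ContinuousOn φ (Set.Icc 0 ((m + 1) * ε)))
    (hφd : ∀ j, j ≤ m → ∀ t ∈ Set.Ioo ((j : ℝ) * ε) ((j + 1 : ℝ) * ε),
      HasDerivAt φ (f (φ t) + ∑ i, uc j i • g i (φ t)) t) :
    ∀ j, j ≤ m →
      ‖(f (φ (((j : ℝ) + 1) * ε)) + ∑ i, uc j i • g i (φ (((j : ℝ) + 1) * ε)))
        - (f (φ (((m : ℝ) + 1) * ε)) + ∑ i, uc j i • g i (φ (((m : ℝ) + 1) * ε)))‖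
      ≤ M₀ * M₁ * (m + 1) ^ 3 * ε := by
  intro j hj
  have hstep : ∀ k, k ≤ m →
      ‖φ ((k : ℝ) * ε) - φ (((k : ℝ) + 1) * ε)‖ ≤ (m + 1) * M₀ * ε := by
    intro k hk
    have hk' : (k : ℝ) ≤ m := by exact_mod_cast hk
    have h := norm_sub_le_of_hasDerivAt_Ioo (a := (k : ℝ) * ε) (b := ((k : ℝ) + 1) * ε)
      (C := (m + 1) * M₀) (by linarith) (by positivity)
      (hφc.mono (Set.Icc_subset_Icc (by positivity) (by gcongr)))
      (hφd k hk) (fun t _ => norm_add_sum_smul_le (hucU k hk) (hf _) (fun i => hg i _))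
    convert h using 2
    ring
  have hdist : ‖φ (((j : ℝ) + 1) * ε) - φ (((m : ℝ) + 1) * ε)‖
      ≤ (m + 1) * ((m + 1) * M₀ * ε) := by
    have h := dist_le_Ico_sum_of_dist_le (f := fun k : ℕ => φ ((k : ℝ) * ε))
      (m := j + 1) (n := m + 1) (d := fun _ => (m + 1) * M₀ * ε) (by omega)
      (fun {k} _ hk => by
        rw [dist_eq_norm]
        push_cast
        exact hstep k (by omega))
    rw [dist_eq_norm] at h
    push_cast at h
    refine h.trans ?_
    rw [Finset.sum_const, Nat.card_Ico, nsmul_eq_mul]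
    gcongr
    exact_mod_cast (by omega : m + 1 - (j + 1) ≤ m + 1)
  rw [add_sub_add_comm, ← Finset.sum_sub_distrib]
  simp only [← smul_sub]
  refine (norm_add_sum_smul_le (hucU j hj) (hfL _ _) (fun i => hgL i _ _)).trans ?_
  calc (m + 1) * (M₁ * ‖φ (((j : ℝ) + 1) * ε) - φ (((m : ℝ) + 1) * ε)‖)
      ≤ (m + 1) * (M₁ * ((m + 1) * ((m + 1) * M₀ * ε))) := by gcongr
    _ = M₀ * M₁ * (m + 1) ^ 3 * ε := by ring
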